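/- For δ ≥ 0 set γ_δ = ((σ_m^{−1}−1)+ρ_n^{−1}δ)/(σ_m^{−1}+(ρ_n^{−1}−1)δ) if δ ≥ 1, and γ_δ = ((σ_1^{−1}−1)+ρ_1^{−1}δ)/(σ_1^{−1}+(ρ_1^{−1}−1)δ) if 0 ≤ δ ≤ 1. Then for every k ∈ {1,…,d} and every δ ≥ 0: if ψ̲_k(Λ*(Θ), μ*(δ)) ≤ 1 − δ then ψ̲_k(Λ*(Θ), −μ(γ_δ)) ≤ (d−1)(1 − γ_δ); and if ψ̄_k(Λ*(Θ), μ*(δ)) ≤ 1 − δ then ψ̄_k(Λ*(Θ), −μ(γ_δ)) ≤ (d−1)(1 − γ_δ). -/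

import Mathlib

open Filter

noncomputable section

/-- The weighted norm `|x|_w = max_j |x_j|^(1/w_j)`. -/
def wnorm {k : ℕ} (w : Fin k → ℝ) (x : Fin k → ℝ) : ℝ := ⨆ j, |x j| ^ ((1 : ℝ) / w j)

/-- The lattice `Λ(Θ) = {(x, y − Θx) : x ∈ ℤ^m, y ∈ ℤ^n} ⊂ ℝ^(m+n)`. -/
def latt (m n : ℕ) (Θ : Matrix (Fin n) (Fin m) ℝ) : Set (Fin (m + n) → ℝ) :=
  {v | ∃ (x : Fin m → ℤ) (y : Fin n → ℤ),
    v = Fin.append (fun j => (x j : ℝ))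
      (fun i => (y i : ℝ) - Θ.mulVec (fun j => (x j : ℝ)) i)}

/-- The dual lattice `Λ*(Θ) = {(x + ᵀΘy, y) : x ∈ ℤ^m, y ∈ ℤ^n} ⊂ ℝ^(m+n)`. -/
def lattDual (m n : ℕ) (Θ : Matrix (Fin n) (Fin m) ℝ) : Set (Fin (m + n) → ℝ) :=
  {v | ∃ (x : Fin m → ℤ) (y : Fin n → ℤ),
    v = Fin.append (fun j => (x j : ℝ) + Θ.transpose.mulVec (fun i => (y i : ℝ)) j)
      (fun i => (y i : ℝ))}

/-- `e₁ = (1−dσ₁, …, 1−dσ_m, 1, …, 1)` with `n` trailing ones, `d = m + n`. -/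
def eOne (m n : ℕ) (σ : Fin m → ℝ) : Fin (m + n) → ℝ :=
  Fin.append (fun j => 1 - ((m + n : ℕ) : ℝ) * σ j) (fun _ => 1)

/-- `e₂ = (1, …, 1, 1−dρ_n, …, 1−dρ₁)` with `m` leading ones, `d = m + n`. -/
def eTwo (m n : ℕ) (ρ : Fin n → ℝ) : Fin (m + n) → ℝ :=
  Fin.append (fun _ => (1 : ℝ)) (fun i => 1 - ((m + n : ℕ) : ℝ) * ρ i.rev)

/-- `μ(γ) = −e₁ + γ e₂`. -/
def muGamma (m n : ℕ) (σ : Fin m → ℝ) (ρ : Fin n → ℝ) (γ : ℝ) : Fin (m + n) → ℝ :=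
  -eOne m n σ + γ • eTwo m n ρ

/-- `μ*(δ) = δ e₁ − e₂`. -/
def muStar (m n : ℕ) (σ : Fin m → ℝ) (ρ : Fin n → ℝ) (δ : ℝ) : Fin (m + n) → ℝ :=
  δ • eOne m n σ - eTwo m n ρ

/-- The `k`-th successive minimum `λ_k(B_τ, Λ)` of the box
`B_τ = {z : |z_i| ≤ exp (τ i)}` with respect to the lattice `Λ`. -/
def succMin (d : ℕ) (Λ : Set (Fin d → ℝ)) (τ : Fin d → ℝ) (k : ℕ) : ℝ :=
  sInf {lam : ℝ | 0 < lam ∧ ∃ v : Fin k → (Fin d → ℝ),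
    (∀ l, v l ∈ Λ) ∧ LinearIndependent ℝ v ∧ ∀ l i, |v l i| ≤ lam * Real.exp (τ i)}

/-- `L_k(Λ, τ) = log λ_k(B_τ, Λ)`. -/
def Lk (d : ℕ) (Λ : Set (Fin d → ℝ)) (τ : Fin d → ℝ) (k : ℕ) : ℝ :=
  Real.log (succMin d Λ τ k)

/-- `S_k(Λ, τ) = L_1(Λ, τ) + ⋯ + L_k(Λ, τ)`. -/
def Sk (d : ℕ) (Λ : Set (Fin d → ℝ)) (τ : Fin d → ℝ) (k : ℕ) : ℝ :=
  ∑ j ∈ Finset.Icc 1 k, Lk d Λ τ j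

/-- Schmidt–Summerer lower exponent of the first type:
`ψ̲_k(Λ, μ) = liminf_{s→+∞} L_k(Λ, sμ)/s`. -/
def psiLow (d : ℕ) (Λ : Set (Fin d → ℝ)) (μ : Fin d → ℝ) (k : ℕ) : ℝ :=
  liminf (fun s : ℝ => Lk d Λ (s • μ) k / s) atTop

/-- Schmidt–Summerer upper exponent of the first type:
`ψ̄_k(Λ, μ) = limsup_{s→+∞} L_k(Λ, sμ)/s`. -/
def psiUp (d : ℕ) (Λ : Set (Fin d → ℝ)) (μ : Fin d → ℝ) (k : ℕ) : ℝ :=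
  limsup (fun s : ℝ => Lk d Λ (s • μ) k / s) atTop

/-- Schmidt–Summerer lower exponent of the second type:
`Ψ̲_k(Λ, μ) = liminf_{s→+∞} S_k(Λ, sμ)/s`. -/
def PsiLow (d : ℕ) (Λ : Set (Fin d → ℝ)) (μ : Fin d → ℝ) (k : ℕ) : ℝ :=
  liminf (fun s : ℝ => Sk d Λ (s • μ) k / s) atTop

/-- Schmidt–Summerer upper exponent of the second type:
`Ψ̄_k(Λ, μ) = limsup_{s→+∞} S_k(Λ, sμ)/s`. -/
def PsiUp (d : ℕ) (Λ : Set (Fin d → ℝ)) (μ : Fin d → ℝ) (k : ℕ) : ℝ :=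
  limsup (fun s : ℝ => Sk d Λ (s • μ) k / s) atTop

/-- The system `|x|_σ ≤ t`, `|Θx − y|_ρ ≤ t^(−γ)` admits `k` linearly independent integer
solutions. -/
def solvK {m n : ℕ} (Θ : Matrix (Fin n) (Fin m) ℝ) (σ : Fin m → ℝ) (ρ : Fin n → ℝ)
    (k : ℕ) (γ t : ℝ) : Prop :=
  ∃ v : Fin k → (Fin m → ℤ) × (Fin n → ℤ), LinearIndependent ℤ v ∧
    ∀ l, wnorm σ (fun j => ((v l).1 j : ℝ)) ≤ t ∧
      wnorm ρ (fun i => Θ.mulVec (fun j => ((v l).1 j : ℝ)) i - ((v l).2 i : ℝ)) ≤ t ^ (-γ)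

/-- The `k`-th weighted Diophantine exponent `ω^(k)_{σ,ρ}(Θ)`. -/
def omegaK {m n : ℕ} (Θ : Matrix (Fin n) (Fin m) ℝ) (σ : Fin m → ℝ) (ρ : Fin n → ℝ)
    (k : ℕ) : EReal :=
  sSup (Real.toEReal '' {γ : ℝ | ∀ T : ℝ, ∃ t > T, solvK Θ σ ρ k γ t})

/-- The `k`-th weighted uniform Diophantine exponent `ω̂^(k)_{σ,ρ}(Θ)`. -/
def omegaHatK {m n : ℕ} (Θ : Matrix (Fin n) (Fin m) ℝ) (σ : Fin m → ℝ) (ρ : Fin n → ℝ)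
    (k : ℕ) : EReal :=
  sSup (Real.toEReal '' {γ : ℝ | ∃ T : ℝ, ∀ t > T, solvK Θ σ ρ k γ t})

/-!
The numbers `L_k(Λ, τ)` are antitone in `τ` and satisfy `L_k(Λ, τ + a·𝟙) = L_k(Λ, τ) - a`.
Hence each exponent `ψ` is antitone in `μ`, positively homogeneous, and
`ψ(μ + a·𝟙) = ψ(μ) - a`, so an inequality `A·𝟙 + μ ≤ c(K·𝟙 + ν)` with `c > 0` turns `ψ(μ) ≤ A`
into `ψ(ν) ≤ K`. For `μ = μ*(δ)`, `ν = -μ(γ)`, `A = 1 - δ`, `K = (d - 1)(1 - γ)` this inequality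
reads `-δσ_j ≤ c(1 - γ - σ_j)` and `ρ_i ≤ c(1 - γ + γρ_i)`. The values of `γ` and `c` are those
making both sides equal at one pair of reference weights, and right side minus left side is
an affine function of `σ_j`, respectively `ρ_i`, whose slope has the sign of `δ - 1`. So they hold
for all weights as soon as the reference weights are the largest ones (`δ ≤ 1`) or the smallest ones
(`δ ≥ 1`).
-/

/-! ### Successive minima of boxes -/

section SuccessiveMinima

open scoped Pointwise

variable {d k : ℕ} {Λ : Set (Fin d → ℝ)} {τ τ' : Fin d → ℝ}

/-- The set of `lam > 0` for which the dilated box `lam • B_τ` contains `k` linearly independent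
vectors of `Λ`; its infimum is `succMin d Λ τ k`. -/
def dilations (Λ : Set (Fin d → ℝ)) (τ : Fin d → ℝ) (k : ℕ) : Set ℝ :=
  {lam : ℝ | 0 < lam ∧ ∃ v : Fin k → (Fin d → ℝ),
    (∀ l, v l ∈ Λ) ∧ LinearIndependent ℝ v ∧ ∀ l i, |v l i| ≤ lam * Real.exp (τ i)}

lemma succMin_eq_sInf_dilations : succMin d Λ τ k = sInf (dilations Λ τ k) := rfl

lemma bddBelow_dilations : BddBelow (dilations Λ τ k) := ⟨0, fun _ h => h.1.le⟩

lemma dilations_mono (h : τ ≤ τ') : dilations Λ τ k ⊆ dilations Λ τ' k := by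
  rintro lam ⟨hlam, v, hvΛ, hv, hbox⟩
  refine ⟨hlam, v, hvΛ, hv, fun l i => (hbox l i).trans ?_⟩
  gcongr
  exact h i

lemma dilations_add_const (a : ℝ) :
    dilations Λ (τ + Function.const _ a) k = Real.exp (-a) • dilations Λ τ k := by
  ext lam
  have hexp (x : ℝ) : (Real.exp (-a))⁻¹ * lam * Real.exp x = lam * Real.exp (x + a) := by
    rw [Real.exp_neg, inv_inv, Real.exp_add]
    ring
  simp [Set.mem_smul_set_iff_inv_smul_mem₀ (Real.exp_ne_zero (-a)), dilations, hexp,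
    Real.exp_pos]

lemma succMin_add_const (a : ℝ) :
    succMin d Λ (τ + Function.const _ a) k = Real.exp (-a) * succMin d Λ τ k := by
  rw [succMin_eq_sInf_dilations, dilations_add_const, Real.sInf_smul_of_nonneg (Real.exp_nonneg _),
    smul_eq_mul, ← succMin_eq_sInf_dilations]

lemma le_const_norm (τ : Fin d → ℝ) : τ ≤ Function.const _ ‖τ‖ :=
  fun i => (le_abs_self _).trans (norm_le_pi_norm τ i)

lemma const_neg_norm_le (τ : Fin d → ℝ) : Function.const _ (-‖τ‖) ≤ τ :=
  fun i => (neg_le_neg (norm_le_pi_norm τ i)).trans (neg_abs_le _)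

-- Since `sInf ∅ = 0`, positivity of `succMin d Λ 0 k` includes the existence of `k` linearly
-- independent vectors in `Λ`.
lemma dilations_nonempty (h : 0 < succMin d Λ 0 k) (τ : Fin d → ℝ) :
    (dilations Λ τ k).Nonempty := by
  have hzero : (dilations Λ 0 k).Nonempty := by
    rw [Set.nonempty_iff_ne_empty]
    intro hempty
    rw [succMin_eq_sInf_dilations, hempty, Real.sInf_empty] at h
    exact h.false
  refine Set.Nonempty.mono (dilations_mono (const_neg_norm_le τ)) ?_
  rw [← zero_add (Function.const _ _), dilations_add_const]
  exact hzero.smul_set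

lemma succMin_anti (h : 0 < succMin d Λ 0 k) (hτ : τ ≤ τ') :
    succMin d Λ τ' k ≤ succMin d Λ τ k :=
  csInf_le_csInf bddBelow_dilations (dilations_nonempty h τ) (dilations_mono hτ)

lemma succMin_pos (h : 0 < succMin d Λ 0 k) (τ : Fin d → ℝ) : 0 < succMin d Λ τ k := by
  refine lt_of_lt_of_le ?_ (succMin_anti h (le_const_norm τ))
  rw [← zero_add (Function.const _ _), succMin_add_const]
  exact mul_pos (Real.exp_pos _) h

lemma succMin_zero_pos (hk : 1 ≤ k) {r : ℝ} (hr : 0 < r) (hΛ : ∀ v ∈ Λ, v ≠ 0 → r ≤ ‖v‖)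
    (hindep : ∃ v : Fin k → (Fin d → ℝ), (∀ l, v l ∈ Λ) ∧ LinearIndependent ℝ v) :
    0 < succMin d Λ 0 k := by
  obtain ⟨v, hvΛ, hv⟩ := hindep
  have hnonempty : (dilations Λ 0 k).Nonempty := by
    refine ⟨‖v‖ + 1, by positivity, v, hvΛ, hv, fun l i => ?_⟩
    have : |v l i| ≤ ‖v‖ := (norm_le_pi_norm (v l) i).trans (norm_le_pi_norm v l)
    simpa using this.trans (lt_add_one _).le
  refine hr.trans_le (le_csInf hnonempty ?_)
  rintro lam ⟨hlam, w, hwΛ, hw, hbox⟩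
  refine (hΛ _ (hwΛ ⟨0, hk⟩) (hw.ne_zero _)).trans ?_
  exact (pi_norm_le_iff_of_nonneg hlam.le).2 fun i => by simpa using hbox ⟨0, hk⟩ i

lemma Lk_anti (h : 0 < succMin d Λ 0 k) (hτ : τ ≤ τ') : Lk d Λ τ' k ≤ Lk d Λ τ k :=
  Real.log_le_log (succMin_pos h τ') (succMin_anti h hτ)

lemma Lk_add_const (h : 0 < succMin d Λ 0 k) (τ : Fin d → ℝ) (a : ℝ) :
    Lk d Λ (τ + Function.const _ a) k = Lk d Λ τ k - a := by
  rw [Lk, succMin_add_const, Real.log_mul (Real.exp_ne_zero _) (succMin_pos h τ).ne', Real.log_exp,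
    Lk]
  ring

lemma abs_Lk_sub_Lk_zero_le_norm (h : 0 < succMin d Λ 0 k) (τ : Fin d → ℝ) :
    |Lk d Λ τ k - Lk d Λ 0 k| ≤ ‖τ‖ := by
  have hlower := Lk_anti h (le_const_norm τ)
  have hupper := Lk_anti h (const_neg_norm_le τ)
  rw [← zero_add (Function.const _ _), Lk_add_const h] at hlower hupper
  rw [abs_le]
  constructor <;> linarith

end SuccessiveMinima

/-! ### Schmidt–Summerer exponents -/

section Exponents

variable {d k : ℕ} {Λ : Set (Fin d → ℝ)} {μ ν : Fin d → ℝ}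

lemma eventually_abs_Lk_smul_div_le (h : 0 < succMin d Λ 0 k) (μ : Fin d → ℝ) :
    ∀ᶠ s : ℝ in atTop, |Lk d Λ (s • μ) k / s| ≤ |Lk d Λ 0 k| + ‖μ‖ := by
  filter_upwards [eventually_ge_atTop (1 : ℝ)] with s hs
  have hs0 : 0 < s := by linarith
  rw [abs_div, abs_of_pos hs0, div_le_iff₀ hs0]
  calc |Lk d Λ (s • μ) k|
      ≤ |Lk d Λ 0 k| + |Lk d Λ (s • μ) k - Lk d Λ 0 k| := by
        simpa using abs_add_le (Lk d Λ 0 k) (Lk d Λ (s • μ) k - Lk d Λ 0 k)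
    _ ≤ |Lk d Λ 0 k| * s + ‖s • μ‖ :=
        add_le_add (le_mul_of_one_le_right (abs_nonneg _) hs) (abs_Lk_sub_Lk_zero_le_norm h _)
    _ = (|Lk d Λ 0 k| + ‖μ‖) * s := by
        rw [norm_smul, Real.norm_of_nonneg hs0.le]
        ring

lemma isBoundedUnder_le_Lk_smul_div (h : 0 < succMin d Λ 0 k) (μ : Fin d → ℝ) :
    IsBoundedUnder (· ≤ ·) atTop fun s : ℝ => Lk d Λ (s • μ) k / s :=
  isBoundedUnder_of_eventually_le
    ((eventually_abs_Lk_smul_div_le h μ).mono fun _ hs => (abs_le.1 hs).2)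

lemma isBoundedUnder_ge_Lk_smul_div (h : 0 < succMin d Λ 0 k) (μ : Fin d → ℝ) :
    IsBoundedUnder (· ≥ ·) atTop fun s : ℝ => Lk d Λ (s • μ) k / s :=
  isBoundedUnder_of_eventually_ge
    ((eventually_abs_Lk_smul_div_le h μ).mono fun _ hs => (abs_le.1 hs).1)

lemma eventually_Lk_smul_div_anti (h : 0 < succMin d Λ 0 k) (hμν : μ ≤ ν) :
    ∀ᶠ s : ℝ in atTop, Lk d Λ (s • ν) k / s ≤ Lk d Λ (s • μ) k / s := by
  filter_upwards [eventually_ge_atTop (0 : ℝ)] with s hs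
  exact div_le_div_of_nonneg_right (Lk_anti h (smul_le_smul_of_nonneg_left hμν hs)) hs

lemma eventuallyEq_Lk_smul_add_const_div (h : 0 < succMin d Λ 0 k) (μ : Fin d → ℝ) (a : ℝ) :
    (fun s : ℝ => Lk d Λ (s • (μ + Function.const _ a)) k / s) =ᶠ[atTop]
      fun s => Lk d Λ (s • μ) k / s - a := by
  filter_upwards [eventually_ne_atTop (0 : ℝ)] with s hs
  have hconst : s • Function.const (Fin d) a = Function.const _ (s * a) := rfl
  rw [smul_add, hconst, Lk_add_const h, sub_div, mul_div_cancel_left₀ _ hs]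

lemma Lk_smul_smul_div {c : ℝ} (hc : c ≠ 0) (μ : Fin d → ℝ) (s : ℝ) :
    Lk d Λ (s • c • μ) k / s = c * (Lk d Λ ((c * s) • μ) k / (c * s)) := by
  rw [smul_smul, mul_comm s c]
  field_simp

lemma psiLow_anti (h : 0 < succMin d Λ 0 k) (hμν : μ ≤ ν) :
    psiLow d Λ ν k ≤ psiLow d Λ μ k :=
  liminf_le_liminf (eventually_Lk_smul_div_anti h hμν) (isBoundedUnder_ge_Lk_smul_div h ν)
    (isBoundedUnder_le_Lk_smul_div h μ).isCoboundedUnder_ge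

lemma psiUp_anti (h : 0 < succMin d Λ 0 k) (hμν : μ ≤ ν) :
    psiUp d Λ ν k ≤ psiUp d Λ μ k :=
  limsup_le_limsup (eventually_Lk_smul_div_anti h hμν)
    (isBoundedUnder_ge_Lk_smul_div h ν).isCoboundedUnder_le (isBoundedUnder_le_Lk_smul_div h μ)

lemma psiLow_add_const (h : 0 < succMin d Λ 0 k) (μ : Fin d → ℝ) (a : ℝ) :
    psiLow d Λ (μ + Function.const _ a) k = psiLow d Λ μ k - a :=
  (liminf_congr (eventuallyEq_Lk_smul_add_const_div h μ a)).trans <|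
    liminf_sub_const _ _ _ (isBoundedUnder_le_Lk_smul_div h μ).isCoboundedUnder_ge
      (isBoundedUnder_ge_Lk_smul_div h μ)

lemma psiUp_add_const (h : 0 < succMin d Λ 0 k) (μ : Fin d → ℝ) (a : ℝ) :
    psiUp d Λ (μ + Function.const _ a) k = psiUp d Λ μ k - a :=
  (limsup_congr (eventuallyEq_Lk_smul_add_const_div h μ a)).trans <|
    limsup_sub_const _ _ _ (isBoundedUnder_le_Lk_smul_div h μ)
      (isBoundedUnder_ge_Lk_smul_div h μ).isCoboundedUnder_le

lemma map_mul_left_atTop {c : ℝ} (hc : 0 < c) : map (fun s : ℝ => c * s) atTop = atTop :=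
  (OrderIso.mulLeft₀ c hc).map_atTop

lemma psiLow_smul (h : 0 < succMin d Λ 0 k) {c : ℝ} (hc : 0 < c) (μ : Fin d → ℝ) :
    psiLow d Λ (c • μ) k = c * psiLow d Λ μ k := by
  let rate : ℝ → ℝ := fun s => Lk d Λ (s • μ) k / s
  calc psiLow d Λ (c • μ) k
      = liminf ((fun t => c * rate t) ∘ fun s => c * s) atTop :=
        congrArg (liminf · atTop) (funext (Lk_smul_smul_div hc.ne' μ))
    _ = liminf (fun t => c * rate t) atTop := by
        rw [liminf_comp, map_mul_left_atTop hc]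
    _ = c * psiLow d Λ μ k :=
        ((monotone_mul_left_of_nonneg hc.le).map_liminf_of_continuousAt rate
          (continuous_const_mul c).continuousAt
          (isBoundedUnder_le_Lk_smul_div h μ).isCoboundedUnder_ge
          (isBoundedUnder_ge_Lk_smul_div h μ)).symm

lemma psiUp_smul (h : 0 < succMin d Λ 0 k) {c : ℝ} (hc : 0 < c) (μ : Fin d → ℝ) :
    psiUp d Λ (c • μ) k = c * psiUp d Λ μ k := by
  let rate : ℝ → ℝ := fun s => Lk d Λ (s • μ) k / s
  calc psiUp d Λ (c • μ) k
      = limsup ((fun t => c * rate t) ∘ fun s => c * s) atTop :=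
        congrArg (limsup · atTop) (funext (Lk_smul_smul_div hc.ne' μ))
    _ = limsup (fun t => c * rate t) atTop := by
        rw [limsup_comp, map_mul_left_atTop hc]
    _ = c * psiUp d Λ μ k :=
        ((monotone_mul_left_of_nonneg hc.le).map_limsup_of_continuousAt rate
          (continuous_const_mul c).continuousAt
          (isBoundedUnder_le_Lk_smul_div h μ)
          (isBoundedUnder_ge_Lk_smul_div h μ).isCoboundedUnder_le).symm

variable {c A K : ℝ}

lemma psiLow_le_of_add_const_le_smul (h : 0 < succMin d Λ 0 k) (hc : 0 < c)
    (hμν : μ + Function.const _ A ≤ c • (ν + Function.const _ K)) (hμ : psiLow d Λ μ k ≤ A) :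
    psiLow d Λ ν k ≤ K := by
  have hψ := psiLow_anti h hμν
  rw [psiLow_smul h hc, psiLow_add_const h, psiLow_add_const h] at hψ
  exact sub_nonpos.1 (nonpos_of_mul_nonpos_right (hψ.trans (sub_nonpos.2 hμ)) hc)

lemma psiUp_le_of_add_const_le_smul (h : 0 < succMin d Λ 0 k) (hc : 0 < c)
    (hμν : μ + Function.const _ A ≤ c • (ν + Function.const _ K)) (hμ : psiUp d Λ μ k ≤ A) :
    psiUp d Λ ν k ≤ K := by
  have hψ := psiUp_anti h hμν
  rw [psiUp_smul h hc, psiUp_add_const h, psiUp_add_const h] at hψ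
  exact sub_nonpos.1 (nonpos_of_mul_nonpos_right (hψ.trans (sub_nonpos.2 hμ)) hc)

end Exponents

/-! ### The dual lattice -/

section DualLattice

variable {m n : ℕ} (Θ : Matrix (Fin n) (Fin m) ℝ)

lemma one_le_norm_of_mem_lattDual {v : Fin (m + n) → ℝ} (hv : v ∈ lattDual m n Θ)
    (hv0 : v ≠ 0) : 1 ≤ ‖v‖ := by
  obtain ⟨x, y, rfl⟩ := hv
  have one_le_abs {z : ℤ} (hz : z ≠ 0) : 1 ≤ |(z : ℝ)| := mod_cast Int.one_le_abs hz
  by_cases hy : y = 0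
  · subst hy
    obtain ⟨j, hj⟩ : ∃ j, x j ≠ 0 := by
      by_contra! hx
      refine hv0 (funext fun i => ?_)
      induction i using Fin.addCases <;> simp [hx, Matrix.mulVec, dotProduct]
    refine le_trans ?_ (norm_le_pi_norm _ (Fin.castAdd n j))
    simpa [Matrix.mulVec, dotProduct] using one_le_abs hj
  · obtain ⟨i, hi⟩ := Function.ne_iff.1 hy
    refine le_trans ?_ (norm_le_pi_norm _ (Fin.natAdd m i))
    simpa using one_le_abs hi

/-- The standard basis of the dual lattice `Λ*(Θ)`, made of the vectors `(e_j, 0)` and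
`(ᵀΘ e_i, e_i)`; it provides `k` linearly independent lattice vectors for every `k ≤ m + n`. -/
def lattDualBasis : Fin (m + n) → (Fin (m + n) → ℝ) :=
  Fin.append (fun j => Fin.append (Pi.single j 1) 0) (fun i => Fin.append (Θ i) (Pi.single i 1))

lemma lattDualBasis_mem (l : Fin (m + n)) : lattDualBasis Θ l ∈ lattDual m n Θ := by
  have cast_single {p : ℕ} (i : Fin p) :
      (fun i' => ((Pi.single i 1 : Fin p → ℤ) i' : ℝ)) = Pi.single i 1 := by
    ext i'
    simp [Pi.single_apply]
  induction l using Fin.addCases with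
  | left j =>
    refine ⟨Pi.single j 1, 0, ?_⟩
    simp [lattDualBasis, cast_single, Matrix.mulVec, dotProduct, Pi.zero_def]
  | right i =>
    refine ⟨0, Pi.single i 1, ?_⟩
    simp [lattDualBasis, cast_single]

lemma linearIndependent_lattDualBasis : LinearIndependent ℝ (lattDualBasis Θ) := by
  rw [Fintype.linearIndependent_iff]
  intro g hg
  have hright (i : Fin n) : g (Fin.natAdd m i) = 0 := by
    simpa [Fin.sum_univ_add, lattDualBasis, Pi.single_apply] using congrFun hg (Fin.natAdd m i)
  have hleft (j : Fin m) : g (Fin.castAdd n j) = 0 := by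
    simpa [Fin.sum_univ_add, lattDualBasis, hright, Pi.single_apply] using
      congrFun hg (Fin.castAdd n j)
  exact Fin.addCases hleft hright

lemma succMin_lattDual_zero_pos {k : ℕ} (hk1 : 1 ≤ k) (hkd : k ≤ m + n) :
    0 < succMin (m + n) (lattDual m n Θ) 0 k :=
  succMin_zero_pos hk1 one_pos (fun _ => one_le_norm_of_mem_lattDual Θ)
    ⟨lattDualBasis Θ ∘ Fin.castLE hkd, fun _ => lattDualBasis_mem Θ _,
      (linearIndependent_lattDualBasis Θ).comp _ (Fin.castLE_injective hkd)⟩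

end DualLattice

/-! ### The transference exponent -/

section Transference

variable {σ₀ ρ₀ δ : ℝ}

/-- The exponent `γ` attached to `δ` by the reference weights `σ₀` and `ρ₀`; the `γ_δ` of the
theorem is its value at the largest weights for `δ < 1` and at the smallest weights for `1 ≤ δ`. -/
def transferExponent (σ₀ ρ₀ δ : ℝ) : ℝ :=
  ((σ₀⁻¹ - 1) + ρ₀⁻¹ * δ) / (σ₀⁻¹ + (ρ₀⁻¹ - 1) * δ)

/-- The factor `c` by which the parameter `s` is rescaled when passing from `μ*(δ)` to `-μ(γ)`,
where `γ = transferExponent σ₀ ρ₀ δ`. -/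
def transferScale (σ₀ ρ₀ δ : ℝ) : ℝ :=
  (σ₀⁻¹ + (ρ₀⁻¹ - 1) * δ) / (σ₀⁻¹ + ρ₀⁻¹ - 1)

lemma inv_add_inv_sub_one_pos (hσ₀ : σ₀ ∈ Set.Ioc 0 1) (hρ₀ : ρ₀ ∈ Set.Ioc 0 1) :
    0 < σ₀⁻¹ + ρ₀⁻¹ - 1 := by
  linarith [(one_le_inv₀ hσ₀.1).2 hσ₀.2, (one_le_inv₀ hρ₀.1).2 hρ₀.2]

lemma inv_add_inv_sub_one_mul_pos (hσ₀ : 0 < σ₀) (hρ₀ : ρ₀ ∈ Set.Ioc 0 1) (hδ : 0 ≤ δ) :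
    0 < σ₀⁻¹ + (ρ₀⁻¹ - 1) * δ :=
  add_pos_of_pos_of_nonneg (inv_pos.2 hσ₀)
    (mul_nonneg (sub_nonneg.2 ((one_le_inv₀ hρ₀.1).2 hρ₀.2)) hδ)

lemma transferScale_pos (hσ₀ : σ₀ ∈ Set.Ioc 0 1) (hρ₀ : ρ₀ ∈ Set.Ioc 0 1) (hδ : 0 ≤ δ) :
    0 < transferScale σ₀ ρ₀ δ :=
  div_pos (inv_add_inv_sub_one_mul_pos hσ₀.1 hρ₀ hδ) (inv_add_inv_sub_one_pos hσ₀ hρ₀)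

lemma transferScale_mul_inv_add_inv_sub_one (hσ₀ : σ₀ ∈ Set.Ioc 0 1) (hρ₀ : ρ₀ ∈ Set.Ioc 0 1) :
    transferScale σ₀ ρ₀ δ * (σ₀⁻¹ + ρ₀⁻¹ - 1) = σ₀⁻¹ + (ρ₀⁻¹ - 1) * δ :=
  div_mul_cancel₀ _ (inv_add_inv_sub_one_pos hσ₀ hρ₀).ne'

lemma transferExponent_mul_inv_add (hσ₀ : 0 < σ₀) (hρ₀ : ρ₀ ∈ Set.Ioc 0 1) (hδ : 0 ≤ δ) :
    transferExponent σ₀ ρ₀ δ * (σ₀⁻¹ + (ρ₀⁻¹ - 1) * δ) = (σ₀⁻¹ - 1) + ρ₀⁻¹ * δ :=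
  div_mul_cancel₀ _ (inv_add_inv_sub_one_mul_pos hσ₀ hρ₀ hδ).ne'

lemma neg_mul_le_transferScale_mul (hσ₀ : σ₀ ∈ Set.Ioc 0 1) (hρ₀ : ρ₀ ∈ Set.Ioc 0 1)
    (hδ : 0 ≤ δ) {s : ℝ} (hs : 0 ≤ (1 - δ) * (σ₀ - s)) :
    -(δ * s) ≤ transferScale σ₀ ρ₀ δ * (1 - transferExponent σ₀ ρ₀ δ - s) := by
  have hpos := inv_add_inv_sub_one_pos hσ₀ hρ₀
  have hc := transferScale_mul_inv_add_inv_sub_one (δ := δ) hσ₀ hρ₀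
  have hγ := transferExponent_mul_inv_add hσ₀.1 hρ₀ hδ
  have hgap : transferScale σ₀ ρ₀ δ * (1 - transferExponent σ₀ ρ₀ δ - s) - -(δ * s) =
      σ₀⁻¹ * ((1 - δ) * (σ₀ - s)) / (σ₀⁻¹ + ρ₀⁻¹ - 1) := by
    rw [eq_div_iff hpos.ne']
    linear_combination (1 - transferExponent σ₀ ρ₀ δ - s) * hc - hγ -
      (1 - δ) * inv_mul_cancel₀ hσ₀.1.ne'
  rw [← sub_nonneg, hgap]
  exact div_nonneg (mul_nonneg (inv_nonneg.2 hσ₀.1.le) hs) hpos.le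

lemma le_transferScale_mul (hσ₀ : σ₀ ∈ Set.Ioc 0 1) (hρ₀ : ρ₀ ∈ Set.Ioc 0 1)
    (hδ : 0 ≤ δ) {r : ℝ} (hr : 0 ≤ (1 - δ) * (ρ₀ - r)) :
    r ≤ transferScale σ₀ ρ₀ δ *
      (1 - transferExponent σ₀ ρ₀ δ + transferExponent σ₀ ρ₀ δ * r) := by
  have hpos := inv_add_inv_sub_one_pos hσ₀ hρ₀
  have hc := transferScale_mul_inv_add_inv_sub_one (δ := δ) hσ₀ hρ₀
  have hγ := transferExponent_mul_inv_add hσ₀.1 hρ₀ hδ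
  have hgap : transferScale σ₀ ρ₀ δ *
      (1 - transferExponent σ₀ ρ₀ δ + transferExponent σ₀ ρ₀ δ * r) - r =
      ρ₀⁻¹ * ((1 - δ) * (ρ₀ - r)) / (σ₀⁻¹ + ρ₀⁻¹ - 1) := by
    rw [eq_div_iff hpos.ne']
    linear_combination
      (1 - transferExponent σ₀ ρ₀ δ + transferExponent σ₀ ρ₀ δ * r) * hc - (1 - r) * hγ -
        (1 - δ) * inv_mul_cancel₀ hρ₀.1.ne'
  rw [← sub_nonneg, hgap]
  exact div_nonneg (mul_nonneg (inv_nonneg.2 hρ₀.1.le) hr) hpos.le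

variable {m n : ℕ} {σ : Fin m → ℝ} {ρ : Fin n → ℝ}

lemma muStar_add_const_le_smul_neg_muGamma (hσ₀ : σ₀ ∈ Set.Ioc 0 1) (hρ₀ : ρ₀ ∈ Set.Ioc 0 1)
    (hδ : 0 ≤ δ) (hσ : ∀ j, 0 ≤ (1 - δ) * (σ₀ - σ j)) (hρ : ∀ i, 0 ≤ (1 - δ) * (ρ₀ - ρ i)) :
    muStar m n σ ρ δ + Function.const _ (1 - δ) ≤ transferScale σ₀ ρ₀ δ •
      (-muGamma m n σ ρ (transferExponent σ₀ ρ₀ δ) +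
        Function.const _ (((m + n : ℕ) - 1 : ℝ) * (1 - transferExponent σ₀ ρ₀ δ))) := by
  have hd : (0 : ℝ) ≤ (m + n : ℕ) := Nat.cast_nonneg _
  intro i
  induction i using Fin.addCases with
  | left j =>
    have := mul_le_mul_of_nonneg_left (neg_mul_le_transferScale_mul hσ₀ hρ₀ hδ (hσ j)) hd
    simp only [muStar, muGamma, eOne, eTwo, Pi.add_apply, Pi.sub_apply, Pi.neg_apply,
      Pi.smul_apply, smul_eq_mul, Fin.append_left, Function.const_apply]
    linarith
  | right i =>
    have := mul_le_mul_of_nonneg_left (le_transferScale_mul hσ₀ hρ₀ hδ (hρ i.rev)) hd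
    simp only [muStar, muGamma, eOne, eTwo, Pi.add_apply, Pi.sub_apply, Pi.neg_apply,
      Pi.smul_apply, smul_eq_mul, Fin.append_right, Function.const_apply]
    linarith

theorem psi_neg_muGamma_transferExponent_le {k : ℕ} {Λ : Set (Fin (m + n) → ℝ)}
    (h : 0 < succMin (m + n) Λ 0 k) (hσ₀ : σ₀ ∈ Set.Ioc 0 1) (hρ₀ : ρ₀ ∈ Set.Ioc 0 1)
    (hδ : 0 ≤ δ) (hσ : ∀ j, 0 ≤ (1 - δ) * (σ₀ - σ j)) (hρ : ∀ i, 0 ≤ (1 - δ) * (ρ₀ - ρ i)) :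
    (psiLow (m + n) Λ (muStar m n σ ρ δ) k ≤ 1 - δ →
      psiLow (m + n) Λ (-muGamma m n σ ρ (transferExponent σ₀ ρ₀ δ)) k ≤
        ((m + n : ℕ) - 1 : ℝ) * (1 - transferExponent σ₀ ρ₀ δ)) ∧
    (psiUp (m + n) Λ (muStar m n σ ρ δ) k ≤ 1 - δ →
      psiUp (m + n) Λ (-muGamma m n σ ρ (transferExponent σ₀ ρ₀ δ)) k ≤
        ((m + n : ℕ) - 1 : ℝ) * (1 - transferExponent σ₀ ρ₀ δ)) :=
  have hc := transferScale_pos hσ₀ hρ₀ hδ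
  have hle := muStar_add_const_le_smul_neg_muGamma hσ₀ hρ₀ hδ hσ hρ
  ⟨psiLow_le_of_add_const_le_smul h hc hle, psiUp_le_of_add_const_le_smul h hc hle⟩

end Transference

lemma mem_Ioc_zero_one_of_sum_eq_one {ι : Type*} [Fintype ι] {w : ι → ℝ} (hpos : ∀ i, 0 < w i)
    (hsum : ∑ i, w i = 1) (i : ι) : w i ∈ Set.Ioc 0 1 :=
  ⟨hpos i, hsum ▸ Finset.single_le_sum (fun i _ => (hpos i).le) (Finset.mem_univ i)⟩

theorem stmt12_general {m n : ℕ} {k : ℕ} {Λ : Set (Fin (m + 1 + (n + 1)) → ℝ)}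
    (hΛ : 0 < succMin (m + 1 + (n + 1)) Λ 0 k)
    {σ : Fin (m + 1) → ℝ} {ρ : Fin (n + 1) → ℝ} (hσa : Antitone σ) (hρa : Antitone ρ)
    (hσ : ∀ j, σ j ∈ Set.Ioc 0 1) (hρ : ∀ i, ρ i ∈ Set.Ioc 0 1)
    {δ : ℝ} (hδ : 0 ≤ δ) {γδ : ℝ}
    (hγδ : γδ = if 1 ≤ δ then
        (((σ (Fin.last m))⁻¹ - 1) + (ρ (Fin.last n))⁻¹ * δ) /
          ((σ (Fin.last m))⁻¹ + ((ρ (Fin.last n))⁻¹ - 1) * δ)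
      else
        (((σ 0)⁻¹ - 1) + (ρ 0)⁻¹ * δ) / ((σ 0)⁻¹ + ((ρ 0)⁻¹ - 1) * δ)) :
    (psiLow (m + 1 + (n + 1)) Λ (muStar (m + 1) (n + 1) σ ρ δ) k ≤ 1 - δ →
      psiLow (m + 1 + (n + 1)) Λ (-muGamma (m + 1) (n + 1) σ ρ γδ) k ≤
        ((m + 1 + (n + 1) : ℕ) - 1 : ℝ) * (1 - γδ)) ∧
    (psiUp (m + 1 + (n + 1)) Λ (muStar (m + 1) (n + 1) σ ρ δ) k ≤ 1 - δ →
      psiUp (m + 1 + (n + 1)) Λ (-muGamma (m + 1) (n + 1) σ ρ γδ) k ≤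
        ((m + 1 + (n + 1) : ℕ) - 1 : ℝ) * (1 - γδ)) := by
  subst hγδ
  split_ifs with h1
  · exact psi_neg_muGamma_transferExponent_le hΛ (hσ _) (hρ _) hδ
      (fun j => mul_nonneg_of_nonpos_of_nonpos (sub_nonpos.2 h1)
        (sub_nonpos.2 (hσa (Fin.le_last j))))
      (fun i => mul_nonneg_of_nonpos_of_nonpos (sub_nonpos.2 h1)
        (sub_nonpos.2 (hρa (Fin.le_last i))))
  · have h1' : 0 ≤ 1 - δ := sub_nonneg.2 (not_le.1 h1).le
    exact psi_neg_muGamma_transferExponent_le hΛ (hσ _) (hρ _) hδ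
      (fun j => mul_nonneg h1' (sub_nonneg.2 (hσa (Fin.zero_le j))))
      (fun i => mul_nonneg h1' (sub_nonneg.2 (hρa (Fin.zero_le i))))

theorem stmt12 {m n : ℕ} (Θ : Matrix (Fin (n + 1)) (Fin (m + 1)) ℝ)
    (σ : Fin (m + 1) → ℝ) (ρ : Fin (n + 1) → ℝ)
    (hσa : Antitone σ) (hρa : Antitone ρ)
    (hσp : ∀ j, 0 < σ j) (hρp : ∀ i, 0 < ρ i)
    (hσs : ∑ j, σ j = 1) (hρs : ∑ i, ρ i = 1)
    (δ : ℝ) (hδ : 0 ≤ δ)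
    (γδ : ℝ)
    (hγδ : γδ = if 1 ≤ δ then
        (((σ (Fin.last m))⁻¹ - 1) + (ρ (Fin.last n))⁻¹ * δ) /
          ((σ (Fin.last m))⁻¹ + ((ρ (Fin.last n))⁻¹ - 1) * δ)
      else
        (((σ 0)⁻¹ - 1) + (ρ 0)⁻¹ * δ) / ((σ 0)⁻¹ + ((ρ 0)⁻¹ - 1) * δ))
    (k : ℕ) (hk1 : 1 ≤ k) (hkd : k ≤ m + 1 + (n + 1)) :
    (psiLow (m + 1 + (n + 1)) (lattDual (m + 1) (n + 1) Θ)
        (muStar (m + 1) (n + 1) σ ρ δ) k ≤ 1 - δ →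
      psiLow (m + 1 + (n + 1)) (lattDual (m + 1) (n + 1) Θ)
        (-muGamma (m + 1) (n + 1) σ ρ γδ) k ≤
          ((m + 1 + (n + 1) : ℕ) - 1 : ℝ) * (1 - γδ)) ∧
    (psiUp (m + 1 + (n + 1)) (lattDual (m + 1) (n + 1) Θ)
        (muStar (m + 1) (n + 1) σ ρ δ) k ≤ 1 - δ →
      psiUp (m + 1 + (n + 1)) (lattDual (m + 1) (n + 1) Θ)
        (-muGamma (m + 1) (n + 1) σ ρ γδ) k ≤
          ((m + 1 + (n + 1) : ℕ) - 1 : ℝ) * (1 - γδ)) := by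
  exact stmt12_general (succMin_lattDual_zero_pos Θ hk1 hkd) hσa hρa
    (mem_Ioc_zero_one_of_sum_eq_one hσp hσs) (mem_Ioc_zero_one_of_sum_eq_one hρp hρs) hδ hγδ
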